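/- For every positive integer n there exists M ≥ 0 such that for all m ≥ M one has Σ_{a ∈ A_m} i(a)·a^n = 0 in 𝔽_q[T], where i(a) ∈ ℤ/pℤ = 𝔽_p is viewed as an element of 𝔽_q. -/

import Mathlib

/-!
Write a monic polynomial of degree `m` as `T ^ m + ∑ i < m, c i * T ^ i`, so that the sum over `A_m`
becomes a sum over coefficient vectors `c ∈ 𝔽_q ^ m`. Each term in the expansion of `a ^ n` involves
at most `n` of the coefficients, and the weight involves only the top one. Once `n + 1 < m`, every
term is therefore independent of some coefficient, and summing over that coefficient multiplies by
`q = 0`.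
-/

open Finset Polynomial

section DependsOn

variable {ι A : Type*} [Fintype ι] [DecidableEq ι] {α : ι → Type*} [∀ i, Fintype (α i)] [Semiring A]

theorem sum_eq_zero_of_dependsOn {g : (∀ i, α i) → A} {S : Set ι} {i : ι} (hg : DependsOn g S)
    (hi : i ∉ S) (hα : (Fintype.card (α i) : A) = 0) : ∑ c, g c = 0 := by
  rw [← (Equiv.piSplitAt i α).symm.sum_comp, Fintype.sum_prod_type_right]
  refine sum_eq_zero fun y _ => ?_
  have hconst (x x' : α i) :
      g ((Equiv.piSplitAt i α).symm (x, y)) = g ((Equiv.piSplitAt i α).symm (x', y)) :=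
    hg fun j hj => by simp [ne_of_mem_of_not_mem hj hi]
  rcases isEmpty_or_nonempty (α i) with _ | ⟨⟨x₀⟩⟩
  · exact Fintype.sum_empty _
  · rw [sum_congr rfl fun x _ => hconst x x₀, sum_const, card_univ, nsmul_eq_mul, hα, zero_mul]

theorem sum_mul_add_sum_pow_eq_zero (hα : ∀ i, (Fintype.card (α i) : A) = 0) {n : ℕ}
    {w : (∀ i, α i) → A} {S : Finset ι} (hw : DependsOn w S) (hn : #S + n < Fintype.card ι)
    (b : A) (f : ∀ i, α i → A) : ∑ c, w c * (b + ∑ i, f i (c i)) ^ n = 0 := by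
  induction n generalizing w S with
  | zero =>
    obtain ⟨i, -, hi⟩ := exists_mem_notMem_of_card_lt_card (s := S) (t := univ) hn
    simpa using sum_eq_zero_of_dependsOn hw hi (hα i)
  | succ n ih =>
    have hconst : ∑ c, w c * b * (b + ∑ i, f i (c i)) ^ n = 0 :=
      ih (fun c d h => congrArg (· * b) (hw h)) (by lia)
    have hcoord (i : ι) : ∑ c, w c * f i (c i) * (b + ∑ j, f j (c j)) ^ n = 0 := by
      have hdep : DependsOn (fun c => w c * f i (c i)) (insert i S : Finset ι) := fun c d h => by
        have hwcd : w c = w d := hw fun j hj => h j (mem_insert_of_mem hj)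
        simp only [hwcd, h i (mem_insert_self i S)]
      exact ih hdep (by grind [card_insert_le i S])
    simp only [pow_succ', ← mul_assoc, mul_add, add_mul, mul_sum, sum_mul, sum_add_distrib]
    rw [hconst, sum_comm, sum_eq_zero fun i _ => hcoord i, add_zero]

end DependsOn

section MonicPolynomials

variable {R : Type*} [Ring R]

/-- The bijection between monic polynomials of degree `m` and the vectors of their `m` lower
coefficients, the coefficient of `X ^ i` being the entry at `i`. -/
noncomputable def monicEquivCoeffs [Nontrivial R] (m : ℕ) :
    {a : R[X] // a.Monic ∧ a.natDegree = m} ≃ (Fin m → R) :=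
  (monicEquivDegreeLT m).trans (degreeLTEquiv R m).toEquiv

theorem coe_monicEquivCoeffs_symm [Nontrivial R] {m : ℕ} (c : Fin m → R) :
    ((monicEquivCoeffs m).symm c : R[X]) = X ^ m + ∑ i : Fin m, monomial i (c i) :=
  rfl

theorem nextCoeff_monicEquivCoeffs_symm [Nontrivial R] {k : ℕ} (c : Fin (k + 1) → R) :
    ((monicEquivCoeffs (k + 1)).symm c : R[X]).nextCoeff = c (Fin.last k) := by
  have hdeg := ((monicEquivCoeffs (k + 1)).symm c).2.2
  rw [nextCoeff_of_natDegree_pos (by lia), hdeg, coe_monicEquivCoeffs_symm]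
  simp [coeff_X_pow, coeff_monomial, Fin.sum_univ_castSucc, (Fin.is_lt _).ne]

theorem stmt_1_general [Finite R] (w : R → R[X]) {m n : ℕ} (hm : n + 1 < m) :
    ∑ᶠ a ∈ {a : R[X] | a.Monic ∧ a.natDegree = m}, w a.nextCoeff * a ^ n = 0 := by
  nontriviality R
  have := Fintype.ofFinite R
  obtain ⟨k, rfl⟩ := Nat.exists_eq_add_one.mpr (Nat.zero_lt_of_lt hm)
  have hcard : (Fintype.card R : R[X]) = 0 := by
    rw [← C_eq_natCast, Nat.cast_card_eq_zero, C_0]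
  have hw : DependsOn (fun c : Fin (k + 1) → R => w (c (Fin.last k)))
      ({Fin.last k} : Finset (Fin (k + 1))) :=
    fun c d h => congrArg w (h _ (mem_singleton_self _))
  calc ∑ᶠ a ∈ {a : R[X] | a.Monic ∧ a.natDegree = k + 1}, w a.nextCoeff * a ^ n
    _ = ∑ᶠ a : {a : R[X] // a.Monic ∧ a.natDegree = k + 1}, w a.1.nextCoeff * a.1 ^ n :=
      (finsum_set_coe_eq_finsum_mem _).symm
    _ = ∑ c : Fin (k + 1) → R,
          w (c (Fin.last k)) * (X ^ (k + 1) + ∑ i : Fin (k + 1), monomial i (c i)) ^ n := by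
      rw [← finsum_comp_equiv (monicEquivCoeffs (k + 1)).symm, finsum_eq_sum_of_fintype]
      refine sum_congr rfl fun c _ => ?_
      rw [nextCoeff_monicEquivCoeffs_symm, coe_monicEquivCoeffs_symm]
    _ = 0 := sum_mul_add_sum_pow_eq_zero (fun _ => hcard) hw
      (by rw [card_singleton, Fintype.card_fin, add_comm]; exact hm) _ fun i => monomial i

end MonicPolynomials

/-- For every positive integer `n` there exists `M ≥ 0` such that for all `m ≥ M` one has
`Σ_{a ∈ A_m} i(a)·a^n = 0` in `𝔽_q[T]`, where `A_m` is the (finite) set of monic polynomials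
of degree `m` and `i(a) = Tr_{𝔽_q/𝔽_p}(a.nextCoeff) ∈ ℤ/pℤ` is viewed in `𝔽_q`. -/
theorem stmt_1 (p s : ℕ) [Fact p.Prime] (F : Type*) [Field F] [Fintype F]
    [Algebra (ZMod p) F] (hq : Fintype.card F = p ^ s) (n : ℕ) (hn : 0 < n) :
    ∃ M : ℕ, ∀ m ≥ M,
      (∑ᶠ a ∈ {a : Polynomial F | a.Monic ∧ a.natDegree = m},
        Polynomial.C (algebraMap (ZMod p) F (Algebra.trace (ZMod p) F a.nextCoeff)) * a ^ n)
        = 0 := by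
  exact ⟨n + 2, fun _ hm =>
    stmt_1_general (fun x => C (algebraMap (ZMod p) F (Algebra.trace (ZMod p) F x))) hm⟩
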